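/- Let n ≥ 0, n₁ = ⌈n/2⌉, n₀ = ⌊n/2⌋, and let m₁ ≥ 0 be an integer. Let K′ = {[[a,b],[c,d]] ∈ K : a − 1 ∈ 𝔭^{n₀+m₁}, d − 1 ∈ 𝔭^{n₀+m₁}, b ∈ 𝔭^{n₁+m₁}, c ∈ 𝔭^{n₀+m₁}} and K⁰ = K^0(𝔭^{n₁−n₀}). Then K′ is a subgroup of K and is normalized by K⁰ (i.e. k k′ k^{−1} ∈ K′ for all k ∈ K⁰ and k′ ∈ K′); moreover, for all k ∈ K⁰ and k′ ∈ K′, the top-left entries of k′ and of k k′ k^{−1} are congruent modulo 𝔭^{n₁+m₁}. -/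

import Mathlib

open Matrix

section

variable {F : Type*} [Field F]

/-- `x ∈ 𝔬`, the ring of integers of the discretely valued field `(F, v)`. -/
def InO (v : F → ℤ) (x : F) : Prop := x = 0 ∨ 0 ≤ v x

/-- `x ∈ 𝔭^r`. -/
def InP (v : F → ℤ) (r : ℕ) (x : F) : Prop := x = 0 ∨ (r : ℤ) ≤ v x

/-- `k ∈ K = GL₂(𝔬)`: integral entries and unit determinant. -/
def InK (v : F → ℤ) (k : Matrix (Fin 2) (Fin 2) F) : Prop :=
  (∀ i j : Fin 2, InO v (k i j)) ∧ k.det ≠ 0 ∧ v k.det = 0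

/-- `k ∈ K^0(𝔭^r)`: in `K` with upper-right entry in `𝔭^r`. -/
def InK0upper (v : F → ℤ) (r : ℕ) (k : Matrix (Fin 2) (Fin 2) F) : Prop :=
  InK v k ∧ InP v r (k 0 1)

/-- Membership in the congruence subgroup `K′`:
`a − 1, d − 1, c ∈ 𝔭^{n₀+m₁}` and `b ∈ 𝔭^{n₁+m₁}`. -/
def InK' (v : F → ℤ) (n₀ n₁ m₁ : ℕ) (k : Matrix (Fin 2) (Fin 2) F) : Prop :=
  InK v k ∧ InP v (n₀ + m₁) (k 0 0 - 1) ∧ InP v (n₀ + m₁) (k 1 1 - 1) ∧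
    InP v (n₁ + m₁) (k 0 1) ∧ InP v (n₀ + m₁) (k 1 0)

end


section helpers

variable {F : Type*} [Field F] {v : F → ℤ}

/-- The properties of `v` that are used. -/
structure IsVal (v : F → ℤ) : Prop where
  hmul : ∀ x y : F, x ≠ 0 → y ≠ 0 → v (x * y) = v x + v y
  hadd : ∀ x y : F, x ≠ 0 → y ≠ 0 → x + y ≠ 0 → min (v x) (v y) ≤ v (x + y)

namespace IsVal

variable (H : IsVal v)

theorem val_one (H : IsVal v) : v 1 = 0 := by
  have := H.hmul 1 1 one_ne_zero one_ne_zero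
  rw [mul_one] at this; omega

theorem val_neg_one (H : IsVal v) : v (-1) = 0 := by
  have := H.hmul (-1) (-1) (by simp) (by simp)
  rw [neg_mul_neg, mul_one, H.val_one] at this; omega

theorem inv (H : IsVal v) {x : F} (hx : x ≠ 0) (h : v x = 0) : v x⁻¹ = 0 := by
  have := H.hmul x x⁻¹ hx (inv_ne_zero hx)
  rw [mul_inv_cancel₀ hx, H.val_one] at this; omega

theorem mul (H : IsVal v) {r s t : ℕ} {x y : F} (hx : InP v r x) (hy : InP v s y)
    (h : t ≤ r + s) : InP v t (x * y) := by
  by_cases x0 : x = 0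
  · left; simp [x0]
  by_cases y0 : y = 0
  · left; simp [y0]
  right
  have hx := hx.resolve_left x0
  have hy := hy.resolve_left y0
  rw [H.hmul x y x0 y0]; omega

theorem mulL (H : IsVal v) {r : ℕ} {x y : F} (hx : InP v 0 x) (hy : InP v r y) :
    InP v r (x * y) := H.mul hx hy (by omega)

theorem mulR (H : IsVal v) {r : ℕ} {x y : F} (hx : InP v r x) (hy : InP v 0 y) :
    InP v r (x * y) := H.mul hx hy (by omega)

theorem one (H : IsVal v) : InP v 0 1 := by
  right; simp [H.val_one]

theorem neg (H : IsVal v) {r : ℕ} {x : F} (hx : InP v r x) : InP v r (-x) := by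
  have h : InP v 0 (-1 : F) := by right; simp [H.val_neg_one]
  have := H.mulL h hx
  rwa [neg_one_mul] at this

theorem add (H : IsVal v) {r : ℕ} {x y : F} (hx : InP v r x) (hy : InP v r y) :
    InP v r (x + y) := by
  by_cases x0 : x = 0
  · simpa [x0] using hy
  by_cases y0 : y = 0
  · simpa [y0] using hx
  by_cases z : x + y = 0
  · left; exact z
  right
  have hx := hx.resolve_left x0
  have hy := hy.resolve_left y0
  have := H.hadd x y x0 y0 z
  omega

theorem sub (H : IsVal v) {r : ℕ} {x y : F} (hx : InP v r x) (hy : InP v r y) :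
    InP v r (x - y) := by
  rw [sub_eq_add_neg]; exact H.add hx (H.neg hy)

end IsVal

theorem InP.mono {r s : ℕ} {x : F} (hx : InP v r x) (h : s ≤ r) : InP v s x := by
  rcases hx with hx | hx
  · exact Or.inl hx
  · right; omega

theorem inO_iff {x : F} : InO v x ↔ InP v 0 x := by simp [InO, InP]

/-- Repackaged form of membership in `K'`. -/
theorem inK'_mk (H : IsVal v) {n₀ n₁ m₁ : ℕ} {k : Matrix (Fin 2) (Fin 2) F}
    (hd : k.det ≠ 0) (hv : v k.det = 0)
    (h00 : InP v (n₀ + m₁) (k 0 0 - 1)) (h11 : InP v (n₀ + m₁) (k 1 1 - 1))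
    (h01 : InP v (n₁ + m₁) (k 0 1)) (h10 : InP v (n₀ + m₁) (k 1 0)) :
    InK' v n₀ n₁ m₁ k := by
  refine ⟨⟨?_, hd, hv⟩, h00, h11, h01, h10⟩
  have a : InP v 0 (k 0 0) := by
    have := H.add (h00.mono (Nat.zero_le _)) H.one
    rwa [sub_add_cancel] at this
  have d : InP v 0 (k 1 1) := by
    have := H.add (h11.mono (Nat.zero_le _)) H.one
    rwa [sub_add_cancel] at this
  intro i j
  rw [inO_iff]
  fin_cases i <;> fin_cases j
  · exact a
  · exact h01.mono (Nat.zero_le _)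
  · exact h10.mono (Nat.zero_le _)
  · exact d

end helpers

/-- `K′` is a subgroup of `K`, normalized by `K⁰ = K^0(𝔭^{n₁−n₀})`, and
conjugation by `K⁰` preserves the top-left entry modulo `𝔭^{n₁+m₁}`. -/
theorem stmt_9 {F : Type*} [Field F] [CharZero F] (v : F → ℤ)
    (hmul : ∀ x y : F, x ≠ 0 → y ≠ 0 → v (x * y) = v x + v y)
    (hadd : ∀ x y : F, x ≠ 0 → y ≠ 0 → x + y ≠ 0 → min (v x) (v y) ≤ v (x + y))
    (ϖ : F) (hϖ0 : ϖ ≠ 0) (hϖ : v ϖ = 1)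
    (n n₁ n₀ m₁ : ℕ) (hn₁ : n₁ = (n + 1) / 2) (hn₀ : n₀ = n / 2) :
    (InK' v n₀ n₁ m₁ (1 : Matrix (Fin 2) (Fin 2) F)) ∧
    (∀ k₁ k₂ : Matrix (Fin 2) (Fin 2) F,
      InK' v n₀ n₁ m₁ k₁ → InK' v n₀ n₁ m₁ k₂ → InK' v n₀ n₁ m₁ (k₁ * k₂)) ∧
    (∀ k : Matrix (Fin 2) (Fin 2) F, InK' v n₀ n₁ m₁ k →
      ∃ h : Matrix (Fin 2) (Fin 2) F,
        InK' v n₀ n₁ m₁ h ∧ k * h = 1 ∧ h * k = 1) ∧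
    (∀ k kinv : Matrix (Fin 2) (Fin 2) F, InK0upper v (n₁ - n₀) k →
      k * kinv = 1 → kinv * k = 1 →
      ∀ k' : Matrix (Fin 2) (Fin 2) F, InK' v n₀ n₁ m₁ k' →
        InK' v n₀ n₁ m₁ (k * k' * kinv) ∧
          InP v (n₁ + m₁) ((k * k' * kinv) 0 0 - k' 0 0)) := by
  have H : IsVal v := ⟨hmul, hadd⟩
  have hle : n₀ ≤ n₁ := by omega
  refine ⟨?_, ?_, ?_, ?_⟩
  · refine inK'_mk H (by simp) (by simpa using H.val_one) ?_ ?_ ?_ ?_ <;> left <;> simp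
  · rintro k l ⟨⟨ko, kd, kv⟩, ka, ke, kb, kc⟩ ⟨⟨lo, ld, lv⟩, la, le, lb, lc⟩
    have ko' := fun i j => inO_iff.1 (ko i j)
    have lo' := fun i j => inO_iff.1 (lo i j)
    refine inK'_mk H ?_ ?_ ?_ ?_ ?_ ?_
    · rw [det_mul]; exact mul_ne_zero kd ld
    · rw [det_mul, hmul _ _ kd ld, kv, lv]; rfl
    · have : (k * l) 0 0 - 1 = (k 0 0 - 1) * l 0 0 + (l 0 0 - 1) + k 0 1 * l 1 0 := by
        rw [Matrix.mul_apply, Fin.sum_univ_two]; ring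
      rw [this]
      exact H.add (H.add (H.mulR ka (lo' _ _)) la) (H.mulL (ko' _ _) lc)
    · have : (k * l) 1 1 - 1 = (k 1 1 - 1) * l 1 1 + (l 1 1 - 1) + k 1 0 * l 0 1 := by
        rw [Matrix.mul_apply, Fin.sum_univ_two]; ring
      rw [this]
      exact H.add (H.add (H.mulR ke (lo' _ _)) le) (H.mulR kc (lo' _ _))
    · rw [Matrix.mul_apply, Fin.sum_univ_two]
      exact H.add (H.mulL (ko' _ _) lb) (H.mulR kb (lo' _ _))
    · rw [Matrix.mul_apply, Fin.sum_univ_two]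
      exact H.add (H.mulR kc (lo' _ _)) (H.mulL (ko' _ _) lc)
  · rintro k ⟨⟨ko, kd, kv⟩, ka, ke, kb, kc⟩
    have ko' := fun i j => inO_iff.1 (ko i j)
    have hu : IsUnit k.det := isUnit_iff_ne_zero.2 kd
    have huo : InP v 0 (k.det)⁻¹ := by right; simp [H.inv kd kv]
    have hdet : (k⁻¹).det = (k.det)⁻¹ := by rw [det_nonsing_inv, Ring.inverse_eq_inv']
    have hi : k⁻¹ = (k.det)⁻¹ • !![k 1 1, -k 0 1; -k 1 0, k 0 0] := by
      rw [Matrix.inv_def, Ring.inverse_eq_inv', adjugate_fin_two]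
    have hm := inv_mul_cancel₀ kd
    have hD := det_fin_two k
    refine ⟨k⁻¹, inK'_mk H ?_ ?_ ?_ ?_ ?_ ?_, mul_nonsing_inv _ hu, nonsing_inv_mul _ hu⟩
    · rw [hdet]; exact inv_ne_zero kd
    · rw [hdet]; exact H.inv kd kv
    · have : k⁻¹ 0 0 - 1 = (k.det)⁻¹ * (k 0 1 * k 1 0 - k 1 1 * (k 0 0 - 1)) := by
        rw [hi]; simp only [Matrix.smul_apply, smul_eq_mul, of_apply, cons_val', cons_val_zero, cons_val_one, cons_val_fin_one]
        linear_combination (-(k.det)⁻¹) * hD + hm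
      rw [this]
      exact H.mulL huo (H.sub (H.mulL (ko' _ _) kc) (H.mulL (ko' _ _) ka))
    · have : k⁻¹ 1 1 - 1 = (k.det)⁻¹ * (k 0 1 * k 1 0 - k 0 0 * (k 1 1 - 1)) := by
        rw [hi]; simp only [Matrix.smul_apply, smul_eq_mul, of_apply, cons_val', cons_val_zero, cons_val_one, cons_val_fin_one]
        linear_combination (-(k.det)⁻¹) * hD + hm
      rw [this]
      exact H.mulL huo (H.sub (H.mulL (ko' _ _) kc) (H.mulL (ko' _ _) ke))
    · rw [hi]; exact H.mulL huo (H.neg kb)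
    · rw [hi]; exact H.mulL huo (H.neg kc)
  · rintro k kinv ⟨⟨ko, kd, kv⟩, kB⟩ hk1 hk2 l ⟨⟨lo, ld, lv⟩, la, le, lb, lc⟩
    have ko' := fun i j => inO_iff.1 (ko i j)
    have huo : InP v 0 (k.det)⁻¹ := by right; simp [H.inv kd kv]
    have hi : kinv = (k.det)⁻¹ • !![k 1 1, -k 0 1; -k 1 0, k 0 0] := by
      rw [← Matrix.inv_eq_left_inv hk2, Matrix.inv_def, Ring.inverse_eq_inv', adjugate_fin_two]
    have hm := inv_mul_cancel₀ kd
    have hD := det_fin_two k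
    have hdet : (k * l * kinv).det = l.det := by
      have h1 : k.det * kinv.det = 1 := by rw [← det_mul, hk1, det_one]
      rw [det_mul, det_mul]; linear_combination l.det * h1
    have hBm : ∀ z, InP v (n₀ + m₁) z → InP v (n₁ + m₁) (k 0 1 * z) :=
      fun z hz => H.mul kB hz (by omega)
    have lb' : InP v (n₀ + m₁) (l 0 1) := lb.mono (by omega)
    generalize hu : (k.det)⁻¹ = u at *
    rw [hD] at hm
    have e00 : (k * l * kinv) 0 0 - l 0 0 = u * (k 0 1 * (k 1 0 * (l 0 0 - 1) + k 1 1 * l 1 0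
        - k 1 0 * (l 1 1 - 1)) - k 0 0 * k 1 0 * l 0 1) := by
      rw [hi]
      simp only [Matrix.mul_apply, Fin.sum_univ_two, Matrix.smul_apply, smul_eq_mul, of_apply, cons_val', cons_val_zero, cons_val_one, cons_val_fin_one]
      linear_combination (l 0 0) * hm
    have e11 : (k * l * kinv) 1 1 - 1 = u * (k 0 0 * k 1 0 * l 0 1 + k 0 0 * k 1 1 * (l 1 1 - 1)
        - k 0 1 * k 1 0 * (l 0 0 - 1) - k 0 1 * k 1 1 * l 1 0) := by
      rw [hi]
      simp only [Matrix.mul_apply, Fin.sum_univ_two, Matrix.smul_apply, smul_eq_mul, of_apply, cons_val', cons_val_zero, cons_val_one, cons_val_fin_one]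
      linear_combination hm
    have e01 : (k * l * kinv) 0 1 = u * (k 0 1 * (k 0 0 * (l 1 1 - 1) - k 0 0 * (l 0 0 - 1)
        - k 0 1 * l 1 0) + k 0 0 * k 0 0 * l 0 1) := by
      rw [hi]
      simp only [Matrix.mul_apply, Fin.sum_univ_two, Matrix.smul_apply, smul_eq_mul, of_apply, cons_val', cons_val_zero, cons_val_one, cons_val_fin_one]
      ring
    have e10 : (k * l * kinv) 1 0 = u * (k 1 0 * k 1 1 * (l 0 0 - 1) + k 1 1 * k 1 1 * l 1 0
        - k 1 0 * k 1 0 * l 0 1 - k 1 0 * k 1 1 * (l 1 1 - 1)) := by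
      rw [hi]
      simp only [Matrix.mul_apply, Fin.sum_univ_two, Matrix.smul_apply, smul_eq_mul, of_apply, cons_val', cons_val_zero, cons_val_one, cons_val_fin_one]
      ring
    have kk : ∀ i j i' j', InP v 0 (k i j * k i' j') := fun i j i' j' =>
      H.mulL (ko' i j) (ko' i' j')
    have p00 : InP v (n₁ + m₁) ((k * l * kinv) 0 0 - l 0 0) := by
      rw [e00]
      exact H.mulL huo (H.sub (hBm _ (H.sub (H.add (H.mulL (ko' _ _) la) (H.mulL (ko' _ _) lc))
        (H.mulL (ko' _ _) le))) (H.mulL (kk _ _ _ _) lb))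
    refine ⟨inK'_mk H (hdet ▸ ld) (hdet ▸ lv) ?_ ?_ ?_ ?_, p00⟩
    · have := H.add (p00.mono (show n₀ + m₁ ≤ n₁ + m₁ by omega)) la
      rwa [sub_add_sub_cancel] at this
    · rw [e11]
      exact H.mulL huo (H.sub (H.sub (H.add (H.mulL (kk _ _ _ _) lb') (H.mulL (kk _ _ _ _) le))
        (H.mulL (kk _ _ _ _) la)) (H.mulL (kk _ _ _ _) lc))
    · rw [e01]
      exact H.mulL huo (H.add (hBm _ (H.sub (H.sub (H.mulL (ko' _ _) le) (H.mulL (ko' _ _) la))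
        (H.mulL (ko' _ _) lc))) (H.mulL (kk _ _ _ _) lb))
    · rw [e10]
      exact H.mulL huo (H.sub (H.sub (H.add (H.mulL (kk _ _ _ _) la) (H.mulL (kk _ _ _ _) lc))
        (H.mulL (kk _ _ _ _) lb')) (H.mulL (kk _ _ _ _) le))
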